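/- arXiv:2307.10857 — 3 statements merged into one kernel-verified Lean document; each statement's English description precedes it below -/
import Mathlib

section
/- Let V be a Banach space, a < b real numbers, and let F : (a,b) → V be continuous. Suppose there exists a strongly measurable, Bochner-integrable map g : (a,b) → V such that ∫_{(a,b)} φ'(t) · F(t) dt = −∫_{(a,b)} φ(t) · g(t) dt (Bochner integrals with respect to Lebesgue measure) for every smooth compactly supported φ : (a,b) → ℝ. Then F is differentiable at almost every t ∈ (a,b), and F'(t) = g(t) for almost every t ∈ (a,b). -/
/-!
The weak identity forces `F y - F x = ∫_x^y g` for all `a < x < y < b`, and the Lebesgue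
differentiation theorem for Bochner integrals then gives `F' = g` almost everywhere.

For the integral identity, let `θ` be the smooth step function `Real.smoothTransition` and test
with `φ_r(t) = θ(r(t - x)) - θ(r(t - y))`, a smooth function supported in `[x, y + 1/r]`. As
`r → ∞`, `φ_r` stays bounded by `1` and converges everywhere to the indicator of `(x, y]`, so
`∫ φ_r g → ∫_x^y g` by dominated convergence. On the other side, `φ_r'` is the difference of two
approximate identities concentrating at `x` and `y`, so `∫ φ_r' F → F x - F y` by continuity of
`F` (`tendsto_integral_step_deriv`).
-/

open MeasureTheory Set Filter Topology

lemma deriv_smoothTransition_of_nonpos {u : ℝ} (hu : u ≤ 0) :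
    deriv Real.smoothTransition u = 0 := by
  apply IsLocalMin.deriv_eq_zero
  refine Eventually.of_forall fun v => ?_
  rw [Real.smoothTransition.zero_of_nonpos hu]
  exact Real.smoothTransition.nonneg v

lemma deriv_smoothTransition_of_one_le {u : ℝ} (hu : 1 ≤ u) :
    deriv Real.smoothTransition u = 0 := by
  apply IsLocalMax.deriv_eq_zero
  refine Eventually.of_forall fun v => ?_
  rw [Real.smoothTransition.one_of_one_le hu]
  exact Real.smoothTransition.le_one v

lemma differentiable_smoothTransition : Differentiable ℝ Real.smoothTransition :=
  (Real.smoothTransition.contDiff (n := 1)).differentiable (by simp)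

lemma continuous_deriv_smoothTransition : Continuous (deriv Real.smoothTransition) :=
  (Real.smoothTransition.contDiff (n := 1)).continuous_deriv (by simp)

lemma integral_deriv_smoothTransition : ∫ s in (0 : ℝ)..1, deriv Real.smoothTransition s = 1 := by
  rw [intervalIntegral.integral_deriv_eq_sub (fun x _ => differentiable_smoothTransition x)
    (continuous_deriv_smoothTransition.intervalIntegrable _ _)]
  simp

lemma hasDerivAt_step (r x t : ℝ) :
    HasDerivAt (fun t => Real.smoothTransition (r * (t - x)))
      (r * deriv Real.smoothTransition (r * (t - x))) t := by
  have h1 : HasDerivAt (fun t : ℝ => r * (t - x)) r t := by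
    simpa using ((hasDerivAt_id t).sub_const x).const_mul r
  have h2 := (differentiable_smoothTransition (r * (t - x))).hasDerivAt.comp t h1
  rw [mul_comm]
  exact h2

section

variable {V : Type*} [NormedAddCommGroup V] [NormedSpace ℝ V]

/-- Change of variables `s = r (t - x)`, using that `θ'` lives on `(0, 1)`. -/
lemma integral_step_deriv (F : ℝ → V) (x : ℝ) {r : ℝ} (hr : 0 < r) :
    ∫ t, (r * deriv Real.smoothTransition (r * (t - x))) • F t
      = ∫ s in (0 : ℝ)..1, deriv Real.smoothTransition s • F (x + r⁻¹ * s) := by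
  rw [intervalIntegral.integral_eq_integral_of_support_subset]
  · have := Measure.integral_comp_mul_left
      (fun s => deriv Real.smoothTransition s • F (x + r⁻¹ * s)) r
    have h2 : ∀ t, (r * deriv Real.smoothTransition (r * (t - x))) • F t
        = (fun t => r • (deriv Real.smoothTransition (r * t) • F (x + r⁻¹ * (r * t)))) (t - x) := by
      intro t
      simp [smul_smul, hr.ne']
    simp_rw [h2]
    rw [integral_sub_right_eq_self
      (fun t => r • (deriv Real.smoothTransition (r * t) • F (x + r⁻¹ * (r * t)))) x,
      integral_smul, this, abs_of_pos (inv_pos.2 hr), smul_smul, mul_inv_cancel₀ hr.ne', one_smul]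
  · intro s hs
    by_contra h
    apply hs
    rcases le_or_gt s 0 with h0 | h0
    · simp [deriv_smoothTransition_of_nonpos h0]
    · have : 1 ≤ s := by
        by_contra h1
        exact h ⟨h0, (not_le.1 h1).le⟩
      simp [deriv_smoothTransition_of_one_le this]

/-- The functions `r θ'(r (t - x))` form an approximate identity at `x`. -/
lemma tendsto_integral_step_deriv [CompleteSpace V] {F : ℝ → V} (hF : Continuous F) (x : ℝ) :
    Tendsto (fun r : ℝ => ∫ t, (r * deriv Real.smoothTransition (r * (t - x))) • F t)
      atTop (𝓝 (F x)) := by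
  have hθ := continuous_deriv_smoothTransition
  have hc : Continuous fun ε : ℝ =>
      ∫ s in (0 : ℝ)..1, deriv Real.smoothTransition s • F (x + ε * s) := by
    apply intervalIntegral.continuous_parametric_intervalIntegral_of_continuous'
    fun_prop
  have h0 := (hc.tendsto 0).comp tendsto_inv_atTop_zero
  simp only [zero_mul, add_zero, intervalIntegral.integral_smul_const,
    integral_deriv_smoothTransition, one_smul] at h0
  refine h0.congr' ?_
  filter_upwards [eventually_gt_atTop 0] with r hr
  rw [integral_step_deriv F x hr]
  rfl

lemma integrable_step_deriv {F : ℝ → V} (hF : Continuous F) (x : ℝ) {r : ℝ} (hr : 0 < r) :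
    Integrable fun t => (r * deriv Real.smoothTransition (r * (t - x))) • F t := by
  have hθ := continuous_deriv_smoothTransition
  apply Continuous.integrable_of_hasCompactSupport (by fun_prop)
  refine HasCompactSupport.intro (isCompact_Icc (a := x) (b := x + r⁻¹)) fun t ht => ?_
  rcases lt_or_ge t x with h | h
  · rw [deriv_smoothTransition_of_nonpos]
    · simp
    · nlinarith
  · have h1 : x + r⁻¹ < t := by
      by_contra h1
      exact ht ⟨h, not_lt.1 h1⟩
    rw [deriv_smoothTransition_of_one_le]
    · simp
    · have : r * r⁻¹ ≤ r * (t - x) := by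
        apply mul_le_mul_of_nonneg_left _ hr.le
        linarith
      rwa [mul_inv_cancel₀ hr.ne'] at this

lemma tendsto_step (x t : ℝ) :
    Tendsto (fun r : ℝ => Real.smoothTransition (r * (t - x))) atTop
      (𝓝 (if x < t then 1 else 0)) := by
  split_ifs with h
  · refine tendsto_const_nhds.congr' ?_
    filter_upwards [eventually_ge_atTop (t - x)⁻¹] with r hr
    rw [Real.smoothTransition.one_of_one_le]
    have := mul_le_mul_of_nonneg_right hr (sub_pos.2 h).le
    rwa [inv_mul_cancel₀ (sub_pos.2 h).ne'] at this
  · refine tendsto_const_nhds.congr' ?_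
    filter_upwards [eventually_ge_atTop 0] with r hr
    rw [Real.smoothTransition.zero_of_nonpos]
    nlinarith

/-- A continuous function with integrable weak derivative `g` is a primitive of `g`. -/
lemma sub_eq_integral_of_weak_deriv [CompleteSpace V]
    {a b : ℝ} {F g : ℝ → V}
    (hF : ContinuousOn F (Set.Ioo a b))
    (hg_int : Integrable g (volume.restrict (Set.Ioo a b)))
    (hweak : ∀ φ : ℝ → ℝ, ContDiff ℝ (⊤ : ℕ∞) φ → HasCompactSupport φ →
      tsupport φ ⊆ Set.Ioo a b →
      ∫ t in Set.Ioo a b, deriv φ t • F t = - ∫ t in Set.Ioo a b, φ t • g t)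
    {x y : ℝ} (hax : a < x) (hxy : x ≤ y) (hyb : y < b) :
    F y - F x = ∫ t in x..y, g t := by
  obtain ⟨d, hyd, hdb⟩ := exists_between hyb
  have hxd : x ≤ d := hxy.trans hyd.le
  -- `F` is only continuous on `(a, b)`; replace it by a global continuous extension from `[x, d]`,
  -- an interval that contains the supports of the test functions for large `r`.
  let G : ℝ → V := IccExtend hxd ((Icc x d).domRestrict F)
  have hsub : Icc x d ⊆ Ioo a b := fun t ht => ⟨hax.trans_le ht.1, ht.2.trans_lt hdb⟩
  have hG : Continuous G := (hF.mono hsub).domRestrict.Icc_extend'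
  have hGF : ∀ t ∈ Icc x d, G t = F t := fun t ht => by
    simp [G, IccExtend_of_mem hxd _ ht]
  let φ : ℝ → ℝ → ℝ := fun r t =>
    Real.smoothTransition (r * (t - x)) - Real.smoothTransition (r * (t - y))
  have hder : ∀ r t, deriv (φ r) t = r * deriv Real.smoothTransition (r * (t - x))
      - r * deriv Real.smoothTransition (r * (t - y)) := fun r t =>
    ((hasDerivAt_step r x t).sub (hasDerivAt_step r y t)).deriv
  have hlarge : ∀ᶠ r : ℝ in atTop, 0 < r ∧ 1 ≤ r * (d - y) := by
    filter_upwards [eventually_gt_atTop 0, eventually_ge_atTop (d - y)⁻¹] with r h0 hr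
    refine ⟨h0, ?_⟩
    have := mul_le_mul_of_nonneg_right hr (sub_pos.2 hyd).le
    rwa [inv_mul_cancel₀ (sub_pos.2 hyd).ne'] at this
  have hleft : Tendsto (fun r => ∫ t in Ioo a b, deriv (φ r) t • F t) atTop (𝓝 (F x - F y)) := by
    have h := (tendsto_integral_step_deriv hG x).sub (tendsto_integral_step_deriv hG y)
    rw [hGF x ⟨le_rfl, hxd⟩, hGF y ⟨hxy, hyd.le⟩] at h
    refine h.congr' ?_
    filter_upwards [hlarge] with r hr
    rw [← integral_sub (integrable_step_deriv hG x hr.1) (integrable_step_deriv hG y hr.1)]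
    have hz : ∀ t, t ∉ Icc x d → deriv (φ r) t = 0 := by
      intro t ht
      rw [hder]
      rcases lt_or_ge t x with h | h
      · rw [deriv_smoothTransition_of_nonpos (by nlinarith),
          deriv_smoothTransition_of_nonpos (by nlinarith)]
        simp
      · have h1 : d < t := by
          by_contra h1
          exact ht ⟨h, not_lt.1 h1⟩
        rw [deriv_smoothTransition_of_one_le (by nlinarith),
          deriv_smoothTransition_of_one_le (by nlinarith)]
        simp
    rw [setIntegral_eq_integral_of_forall_compl_eq_zero]
    · congr 1
      ext t
      rw [← sub_smul, ← hder]
      by_cases ht : t ∈ Icc x d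
      · rw [hGF t ht]
      · simp [hz t ht]
    · intro t ht
      rw [hz t (fun h => ht (hsub h)), zero_smul]
  have hright : Tendsto (fun r => ∫ t in Ioo a b, φ r t • g t) atTop
      (𝓝 (∫ t in Ioo a b, (Ioc x y).indicator g t)) := by
    refine tendsto_integral_filter_of_dominated_convergence (fun t => ‖g t‖) ?_ ?_ hg_int.norm ?_
    · refine Eventually.of_forall fun r => AEStronglyMeasurable.smul ?_ hg_int.aestronglyMeasurable
      have : Continuous (φ r) := by
        have := Real.smoothTransition.continuous
        fun_prop
      exact this.aestronglyMeasurable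
    · refine Eventually.of_forall fun r => Eventually.of_forall fun t => ?_
      rw [norm_smul]
      refine mul_le_of_le_one_left (norm_nonneg _) ?_
      rw [Real.norm_eq_abs, abs_le]
      have h1 := Real.smoothTransition.nonneg (r * (t - x))
      have h2 := Real.smoothTransition.nonneg (r * (t - y))
      have h3 := Real.smoothTransition.le_one (r * (t - x))
      have h4 := Real.smoothTransition.le_one (r * (t - y))
      constructor <;> simp only [φ] <;> linarith
    · refine Eventually.of_forall fun t => ?_
      have h := ((tendsto_step x t).sub (tendsto_step y t)).smul_const (g t)
      convert h using 2
      by_cases h1 : x < t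
      · by_cases h2 : y < t
        · simp [h1, h2, indicator, not_le.2 h2]
        · simp [h1, h2, indicator, not_lt.1 h2]
      · have h2 : ¬ y < t := fun h2 => h1 (hxy.trans_lt h2)
        simp [h1, h2, indicator]
  have heq : ∀ᶠ r in atTop, ∫ t in Ioo a b, deriv (φ r) t • F t
      = - ∫ t in Ioo a b, φ r t • g t := by
    filter_upwards [hlarge] with r hr
    have hz : ∀ t, t ∉ Icc x d → φ r t = 0 := by
      intro t ht
      simp only [φ]
      rcases lt_or_ge t x with h | h
      · rw [Real.smoothTransition.zero_of_nonpos (by nlinarith),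
          Real.smoothTransition.zero_of_nonpos (by nlinarith)]
        simp
      · have h1 : d < t := by
          by_contra h1
          exact ht ⟨h, not_lt.1 h1⟩
        rw [Real.smoothTransition.one_of_one_le (by nlinarith),
          Real.smoothTransition.one_of_one_le (by nlinarith)]
        simp
    refine hweak (φ r) ?_ (HasCompactSupport.intro isCompact_Icc hz) ?_
    · have hs := Real.smoothTransition.contDiff (n := ⊤)
      exact (hs.comp (by fun_prop)).sub (hs.comp (by fun_prop))
    · refine Subset.trans (closure_minimal ?_ isClosed_Icc) hsub
      intro t ht
      by_contra h
      exact ht (hz t h)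
  have key := tendsto_nhds_unique (hleft.congr' heq) hright.neg
  have hIoc : Ioc x y ⊆ Ioo a b := fun t ht => ⟨hax.trans ht.1, ht.2.trans_lt hyb⟩
  rw [setIntegral_indicator measurableSet_Ioc, inter_eq_self_of_subset_right hIoc] at key
  rw [intervalIntegral.integral_of_le hxy, ← neg_sub, key, neg_neg]

end

/-- A continuous map `F : (a,b) → V` into a Banach space possessing an
integrable Bochner weak derivative `g` is differentiable almost everywhere on `(a,b)`,
with derivative `g(t)` at almost every `t`. -/
theorem stmt_2
    {V : Type*} [NormedAddCommGroup V] [NormedSpace ℝ V] [CompleteSpace V]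
    (a b : ℝ) (hab : a < b) (F g : ℝ → V)
    (hF : ContinuousOn F (Set.Ioo a b))
    (hg_meas : StronglyMeasurable g)
    (hg_int : Integrable g (volume.restrict (Set.Ioo a b)))
    (hweak : ∀ φ : ℝ → ℝ, ContDiff ℝ (⊤ : ℕ∞) φ → HasCompactSupport φ →
      tsupport φ ⊆ Set.Ioo a b →
      ∫ t in Set.Ioo a b, deriv φ t • F t = - ∫ t in Set.Ioo a b, φ t • g t) :
    ∀ᵐ t : ℝ, t ∈ Set.Ioo a b → HasDerivWithinAt F (g t) (Set.Ioo a b) t := by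
  obtain ⟨c, hac, hcb⟩ := exists_between hab
  have hint : IntervalIntegrable g volume a b :=
    (intervalIntegrable_iff_integrableOn_Ioo_of_le hab.le).2 hg_int
  have hprim : ∀ t ∈ Ioo a b, F t = F c + ∫ s in c..t, g s := by
    intro t ht
    rcases le_total c t with h | h
    · rw [← sub_eq_integral_of_weak_deriv hF hg_int hweak hac h ht.2]
      abel
    · rw [intervalIntegral.integral_symm,
        ← sub_eq_integral_of_weak_deriv hF hg_int hweak ht.1 h hcb]
      abel
  filter_upwards [hint.ae_hasDerivAt_integral] with t ht htab
  rw [uIcc_of_le hab.le] at ht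
  have h := (ht (Ioo_subset_Icc_self htab) c ⟨hac.le, hcb.le⟩).const_add (F c)
  exact h.hasDerivWithinAt.congr hprim (hprim t htab)
end

section
/- Let V be a Banach space, n ≥ 2, and let Ω ⊆ ℝⁿ be an open set. Let F : Ω → V be continuous, and suppose there exists a strongly measurable, Bochner-integrable map g : Ω → V such that ∫_Ω (∂₁φ)(x) · F(x) dx = −∫_Ω φ(x) · g(x) dx (Bochner integrals with respect to Lebesgue measure) for every smooth compactly supported φ : Ω → ℝ. Then for Lebesgue-almost every y ∈ ℝ^{n−1}, the map t ↦ F(t, y) is differentiable at almost every t in the open slice {t ∈ ℝ : (t,y) ∈ Ω}. -/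
/-!
The claim is local, so `Ω` is covered by countably many boxes `Icc a b ×ˢ ball c r` whose closures
lie in `Ω`. On such a box, testing the weak derivative against products `φ (t, y) = η t * ψ y`
and applying Fubini together with the fundamental lemma of the calculus of variations in `y` gives,
for each fixed `η` and almost every `y`, `∫ η' t • F (t, y) + η t • g (t, y) dt = 0`
(`box_ae_eq_zero`).

This is used only for a countable family of `η`: the differences of steep smooth steps
`step a k - step q k` with `q` rational, which approximate the indicator of `(a, q]`.
Their derivatives are approximate Dirac masses at `a` and `q`, so letting `k → ∞` yields
`F (q, y) - F (a, y) = ∫ t in a..q, g (t, y)`, first for rational `q` and then, by continuity, for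
all `q ∈ (a, b)`. The Lebesgue differentiation theorem concludes (`ae_differentiableAt_of_test`).
-/

open MeasureTheory Set Filter Topology

/-! ### Smooth steps -/

/-- A smooth step rising from `0` to `1` on the interval `[s, s + 1 / (k + 1)]`. -/
noncomputable def step (s : ℝ) (k : ℕ) (u : ℝ) : ℝ := Real.smoothTransition ((k + 1) * (u - s))

lemma step_contDiff (s : ℝ) (k : ℕ) : ContDiff ℝ (⊤ : ℕ∞) (step s k) := by
  unfold step
  exact Real.smoothTransition.contDiff.comp (by fun_prop)

lemma step_differentiable (s : ℝ) (k : ℕ) : Differentiable ℝ (step s k) :=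
  (step_contDiff s k).differentiable (by simp)

lemma step_continuous_deriv (s : ℝ) (k : ℕ) : Continuous (deriv (step s k)) :=
  (step_contDiff s k).continuous_deriv (by simp)

lemma step_monotone (s : ℝ) (k : ℕ) : Monotone (step s k) := by
  intro x y hxy
  unfold step
  apply Real.smoothTransition.monotone
  gcongr

lemma step_of_le {s u : ℝ} (k : ℕ) (h : u ≤ s) : step s k u = 0 :=
  Real.smoothTransition.zero_of_nonpos
    (mul_nonpos_of_nonneg_of_nonpos (by positivity) (by linarith))

lemma step_of_ge {s u : ℝ} {k : ℕ} (h : s + 1 / ((k : ℝ) + 1) ≤ u) : step s k u = 1 := by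
  apply Real.smoothTransition.one_of_one_le
  have hk : (0 : ℝ) < k + 1 := by positivity
  have : 1 / ((k : ℝ) + 1) ≤ u - s := by linarith
  rw [div_le_iff₀ hk] at this
  linarith

lemma eventually_inv_le {δ : ℝ} (hδ : 0 < δ) : ∀ᶠ k : ℕ in atTop, 1 / ((k : ℝ) + 1) < δ :=
  (tendsto_order.1 (tendsto_one_div_add_atTop_nhds_zero_nat (𝕜 := ℝ))).2 _ hδ

lemma deriv_step_of_lt {s u : ℝ} (k : ℕ) (h : u < s) : deriv (step s k) u = 0 := by
  have : step s k =ᶠ[𝓝 u] fun _ => (0 : ℝ) := by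
    filter_upwards [Iio_mem_nhds h] with v hv using step_of_le k (le_of_lt hv)
  rw [this.deriv_eq, deriv_const]

lemma deriv_step_of_gt {s u : ℝ} {k : ℕ} (h : s + 1 / ((k : ℝ) + 1) < u) :
    deriv (step s k) u = 0 := by
  have : step s k =ᶠ[𝓝 u] fun _ => (1 : ℝ) := by
    filter_upwards [Ioi_mem_nhds h] with v hv using step_of_ge (le_of_lt hv)
  rw [this.deriv_eq, deriv_const]

/-! ### Weak derivatives on an interval -/

section OneDim

variable {V : Type*} [NormedAddCommGroup V] [NormedSpace ℝ V]

lemma integrableOn_smul_of_continuous {a b : ℝ} {p : ℝ → V} {w : ℝ → ℝ} (hw : Continuous w)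
    (hp : IntegrableOn p (Icc a b)) : IntegrableOn (fun u => w u • p u) (Icc a b) :=
  hp.continuousOn_smul hw.continuousOn isCompact_Icc

/-- The steps at `s` converge boundedly to the indicator of `(s, ∞)`. -/
lemma tendsto_integral_step {a b s : ℝ} (hs : s ∈ Ico a b) {p : ℝ → V}
    (hp : IntegrableOn p (Icc a b)) :
    Tendsto (fun k : ℕ => ∫ u in Icc a b, step s k u • p u) atTop (𝓝 (∫ u in s..b, p u)) := by
  have hlim : ∫ u in s..b, p u = ∫ u in Icc a b, (Ioc s b).indicator p u := by
    rw [setIntegral_indicator measurableSet_Ioc, intervalIntegral.integral_of_le hs.2.le,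
      inter_eq_self_of_subset_right (Ioc_subset_Icc_self.trans (Icc_subset_Icc_left hs.1))]
  rw [hlim]
  refine tendsto_integral_of_dominated_convergence (fun u => ‖p u‖) (fun k => ?_) hp.norm
    (fun k => ?_) ?_
  · exact (step_differentiable s k).continuous.aestronglyMeasurable.smul hp.aestronglyMeasurable
  · refine Eventually.of_forall fun u => ?_
    rw [norm_smul]
    refine mul_le_of_le_one_left (norm_nonneg _) ?_
    rw [Real.norm_eq_abs, step, abs_of_nonneg (Real.smoothTransition.nonneg _)]
    exact Real.smoothTransition.le_one _
  · filter_upwards [ae_restrict_mem measurableSet_Icc] with u hu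
    by_cases hsu : s < u
    · rw [indicator_of_mem (show u ∈ Ioc s b from ⟨hsu, hu.2⟩)]
      apply tendsto_const_nhds.congr'
      filter_upwards [eventually_inv_le (sub_pos.2 hsu)] with k hk
      rw [step_of_ge (by linarith), one_smul]
    · rw [indicator_of_notMem (fun h => hsu h.1)]
      simp [step_of_le _ (not_lt.1 hsu)]

variable [CompleteSpace V]

/-- The derivatives of the steps at `s` are an approximate identity at `s`. -/
lemma tendsto_integral_deriv_step {a b s : ℝ} (hs : s ∈ Ico a b) {h : ℝ → V}
    (hh : ContinuousOn h (Icc a b)) :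
    Tendsto (fun k : ℕ => ∫ u in Icc a b, deriv (step s k) u • h u) atTop (𝓝 (h s)) := by
  have hab : a ≤ b := hs.1.trans hs.2.le
  refine tendsto_setIntegral_peak_smul_of_integrableOn_of_tendsto (x₀ := s)
    measurableSet_Icc measurableSet_Icc subset_rfl self_mem_nhdsWithin (by simp) ?_ ?_ ?_ ?_
    (hh.integrableOn_compact isCompact_Icc) (hh s ⟨hs.1, hs.2.le⟩)
  · exact Eventually.of_forall fun k x _ => (step_monotone s k).deriv_nonneg
  · intro u hu hsu
    obtain ⟨δ, hδ, hball⟩ := Metric.isOpen_iff.1 hu s hsu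
    rw [Metric.tendstoUniformlyOn_iff]
    intro ε hε
    filter_upwards [eventually_inv_le hδ] with k hk x hx
    have hx' : δ ≤ |x - s| := by
      by_contra! hlt
      exact hx.2 (hball (by simpa [Real.dist_eq] using hlt))
    have : deriv (step s k) x = 0 := by
      rcases le_abs.1 hx' with h1 | h1
      · exact deriv_step_of_gt (by linarith)
      · exact deriv_step_of_lt k (by linarith)
    simpa [this] using hε
  · apply tendsto_const_nhds.congr'
    filter_upwards [eventually_inv_le (sub_pos.2 hs.2)] with k hk
    rw [integral_Icc_eq_integral_Ioc, ← intervalIntegral.integral_of_le hab,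
      intervalIntegral.integral_deriv_eq_sub (fun x _ => step_differentiable s k x)
        ((step_continuous_deriv s k).intervalIntegrable _ _),
      step_of_le k hs.1, step_of_ge (by linarith), sub_zero]
  · exact Eventually.of_forall fun k => (step_continuous_deriv s k).aestronglyMeasurable

/-- If `h' = p` weakly on `[a, b]`, tested only against the steps with rational end point, then
`h` is an indefinite integral of `p` and hence differentiable almost everywhere. -/
lemma ae_differentiableAt_of_test {a b : ℝ} {h p : ℝ → V}
    (hh : ContinuousOn h (Icc a b)) (hp : IntegrableOn p (Icc a b))
    (htest : ∀ (q : ℚ) (k : ℕ), a < q → (q : ℝ) + 1 / ((k : ℝ) + 1) ≤ b →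
      ∫ u in Icc a b, (deriv (fun v => step a k v - step q k v) u • h u
        + (step a k u - step q k u) • p u) = 0) :
    ∀ᵐ t : ℝ, t ∈ Ioo a b → DifferentiableAt ℝ h t := by
  by_cases hab : a < b
  swap
  · simp [Ioo_eq_empty hab]
  have hpi : IntervalIntegrable p volume a b :=
    (intervalIntegrable_iff_integrableOn_Icc_of_le hab.le).2 hp
  have hsub : ∀ t ∈ Icc a b, IntervalIntegrable p volume a t := fun t ht =>
    hpi.mono_set (by rw [uIcc_of_le hab.le, uIcc_of_le ht.1]; exact Icc_subset_Icc_right ht.2)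
  have key : ∀ q : ℚ, (q : ℝ) ∈ Ioo a b → h q = h a + ∫ u in a..q, p u := by
    intro q hq
    have ha : a ∈ Ico a b := ⟨le_rfl, hab⟩
    have hq' : (q : ℝ) ∈ Ico a b := ⟨hq.1.le, hq.2⟩
    have T := ((tendsto_integral_deriv_step ha hh).sub (tendsto_integral_deriv_step hq' hh)).add
      ((tendsto_integral_step ha hp).sub (tendsto_integral_step hq' hp))
    have hhi := hh.integrableOn_compact (μ := volume) isCompact_Icc
    have T0 : h a - h q + ((∫ u in a..b, p u) - ∫ u in (q : ℝ)..b, p u) = 0 := by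
      refine tendsto_nhds_unique T (tendsto_const_nhds.congr' ?_)
      filter_upwards [eventually_inv_le (sub_pos.2 hq.2)] with k hk
      rw [← htest q k hq.1 (by linarith)]
      have c1 := integrableOn_smul_of_continuous (step_continuous_deriv a k) hhi
      have c2 := integrableOn_smul_of_continuous (step_continuous_deriv q k) hhi
      have c3 := integrableOn_smul_of_continuous (step_differentiable a k).continuous hp
      have c4 := integrableOn_smul_of_continuous (step_differentiable q k).continuous hp
      rw [← integral_sub c1 c2, ← integral_sub c3 c4, ← integral_add]
      rotate_left
      · exact c1.sub c2
      · exact c3.sub c4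
      refine integral_congr_ae (Eventually.of_forall fun u => ?_)
      have : deriv (fun v => step a k v - step q k v) u
          = deriv (step a k) u - deriv (step q k) u :=
        deriv_fun_sub (step_differentiable a k u) (step_differentiable q k u)
      simp only [this, sub_smul]
    have hqb : IntervalIntegrable p volume q b :=
      (hsub q ⟨hq.1.le, hq.2.le⟩).symm.trans hpi
    rw [← intervalIntegral.integral_add_adjacent_intervals (hsub q ⟨hq.1.le, hq.2.le⟩) hqb,
      add_sub_cancel_right] at T0
    rw [← sub_eq_zero, ← neg_eq_zero, ← T0]
    abel
  have key' : EqOn h (fun t => h a + ∫ u in a..t, p u) (Ioo a b) := by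
    have hcont : ContinuousOn (fun t => h a + ∫ u in a..t, p u) (Icc a b) :=
      continuousOn_const.add (intervalIntegral.continuousOn_primitive_interval
        (by rwa [uIcc_of_le hab.le])|>.mono (by rw [uIcc_of_le hab.le]))
    have hq : EqOn h (fun t => h a + ∫ u in a..t, p u)
        (Ioo a b ∩ range ((↑) : ℚ → ℝ)) := by
      rintro _ ⟨hq, q, rfl⟩
      exact key q hq
    exact hq.of_subset_closure (hh.mono Ioo_subset_Icc_self) (hcont.mono Ioo_subset_Icc_self)
      inter_subset_left (Rat.denseRange_cast.open_subset_closure_inter isOpen_Ioo)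
  filter_upwards [hpi.ae_hasDerivAt_integral] with t ht htI
  have htI' : t ∈ uIcc a b := by rw [uIcc_of_le hab.le]; exact Ioo_subset_Icc_self htI
  have hd := ((ht htI' a left_mem_uIcc).const_add (h a)).differentiableAt
  exact hd.congr_of_eventuallyEq (key'.eventuallyEq_of_mem (Ioo_mem_nhds htI.1 htI.2))

end OneDim

/-! ### Slicing on a box -/

section Box

variable {V : Type*} [NormedAddCommGroup V] [NormedSpace ℝ V] [CompleteSpace V] {m : ℕ}
  {Ω : Set (ℝ × EuclideanSpace ℝ (Fin m))} {F g : ℝ × EuclideanSpace ℝ (Fin m) → V}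

lemma fderiv_tensor {η : ℝ → ℝ} {ψ : EuclideanSpace ℝ (Fin m) → ℝ} (hη : Differentiable ℝ η)
    (hψ : Differentiable ℝ ψ) (x : ℝ × EuclideanSpace ℝ (Fin m)) :
    fderiv ℝ (fun x : ℝ × EuclideanSpace ℝ (Fin m) => η x.1 * ψ x.2) x
      ((1 : ℝ), (0 : EuclideanSpace ℝ (Fin m))) = deriv η x.1 * ψ x.2 := by
  have h1 : HasFDerivAt (fun x : ℝ × EuclideanSpace ℝ (Fin m) => η x.1) _ x :=
    (hη x.1).hasFDerivAt.comp x hasFDerivAt_fst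
  have h2 : HasFDerivAt (fun x : ℝ × EuclideanSpace ℝ (Fin m) => ψ x.2) _ x :=
    (hψ x.2).hasFDerivAt.comp x hasFDerivAt_snd
  rw [HasFDerivAt.fderiv (f := fun x : ℝ × EuclideanSpace ℝ (Fin m) => η x.1 * ψ x.2)
    (h1.mul h2)]
  simp [mul_comm]

/-- For a fixed test function `η` in the first variable, the weak equation on a box disintegrates
over almost every slice. -/
lemma box_ae_eq_zero {a b r : ℝ} {c : EuclideanSpace ℝ (Fin m)}
    (hbox : Icc a b ×ˢ Metric.closedBall c r ⊆ Ω) (hΩ : MeasurableSet Ω)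
    (hF : ContinuousOn F Ω) (hg_int : IntegrableOn g Ω)
    (hweak : ∀ φ : ℝ × EuclideanSpace ℝ (Fin m) → ℝ, ContDiff ℝ (⊤ : ℕ∞) φ →
      HasCompactSupport φ → tsupport φ ⊆ Ω →
      ∫ x in Ω, (fderiv ℝ φ x ((1 : ℝ), (0 : EuclideanSpace ℝ (Fin m)))) • F x
        = - ∫ x in Ω, φ x • g x)
    {η : ℝ → ℝ} (hη : ContDiff ℝ (⊤ : ℕ∞) η) (hηs : tsupport η ⊆ Icc a b) :
    ∀ᵐ y : EuclideanSpace ℝ (Fin m), y ∈ Metric.ball c r →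
      ∫ t in Icc a b, (deriv η t • F (t, y) + η t • g (t, y)) = 0 := by
  have hηd : Differentiable ℝ η := hη.differentiable (by simp)
  have hηc : Continuous (deriv η) := hη.continuous_deriv (by simp)
  set K : Set (ℝ × EuclideanSpace ℝ (Fin m)) := Icc a b ×ˢ Metric.closedBall c r with hK
  set Q : Set (ℝ × EuclideanSpace ℝ (Fin m)) := Icc a b ×ˢ Metric.ball c r with hQ
  have hKc : IsCompact K := isCompact_Icc.prod (isCompact_closedBall c r)
  have hQK : Q ⊆ K := prod_mono subset_rfl Metric.ball_subset_closedBall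
  have hQΩ : Q ⊆ Ω := hQK.trans hbox
  have hμ : (volume : Measure (ℝ × EuclideanSpace ℝ (Fin m))).restrict Q
      = (volume.restrict (Icc a b)).prod (volume.restrict (Metric.ball c r)) := by
    rw [Measure.prod_restrict, Measure.volume_eq_prod]
  have hdF : IntegrableOn (fun x => deriv η x.1 • F x) Q :=
    ((ContinuousOn.smul (by fun_prop) (hF.mono hbox)).integrableOn_compact hKc).mono_set hQK
  have hηg : IntegrableOn (fun x => η x.1 • g x) Q :=
    ((hg_int.mono_set hbox).continuousOn_smul
      (hηd.continuous.comp continuous_fst).continuousOn hKc).mono_set hQK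
  have hH : IntegrableOn (fun x => deriv η x.1 • F x + η x.1 • g x) Q := hdF.add hηg
  have hG : IntegrableOn (fun y => ∫ t in Icc a b, (deriv η t • F (t, y) + η t • g (t, y)))
      (Metric.ball c r) := by
    have := hH
    rw [IntegrableOn, hμ] at this
    exact this.integral_prod_right
  refine Metric.isOpen_ball.ae_eq_zero_of_integral_contDiff_smul_eq_zero
    hG.locallyIntegrableOn fun ψ hψ hψc hψs => ?_
  have hψd : Differentiable ℝ ψ := hψ.differentiable (by simp)
  have hη0 : ∀ t, t ∉ Icc a b → η t = 0 := fun t ht => image_eq_zero_of_notMem_tsupport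
    fun h => ht (hηs h)
  have hη0' : ∀ t, t ∉ Icc a b → deriv η t = 0 := fun t ht => by
    by_contra hne
    exact ht (hηs (support_deriv_subset hne))
  have hψ0 : ∀ y, y ∉ Metric.ball c r → ψ y = 0 := fun y hy => image_eq_zero_of_notMem_tsupport
    fun h => hy (hψs h)
  have hsupp : tsupport (fun x : ℝ × EuclideanSpace ℝ (Fin m) => η x.1 * ψ x.2) ⊆ K := by
    refine closure_minimal (fun x hx => ?_) hKc.isClosed
    by_contra hxK
    rw [Function.mem_support] at hx
    have h1 : x.1 ∈ Icc a b := by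
      by_contra h; exact hx (by simp [hη0 _ h])
    have h2 : x.2 ∈ Metric.ball c r := by
      by_contra h; exact hx (by simp [hψ0 _ h])
    exact hxK (hQK ⟨h1, h2⟩)
  have hw := hweak (fun x => η x.1 * ψ x.2)
    ((hη.comp contDiff_fst).mul (hψ.comp contDiff_snd))
    (hKc.of_isClosed_subset (isClosed_tsupport _) hsupp) (hsupp.trans hbox)
  simp only [fderiv_tensor hηd hψd] at hw
  rw [setIntegral_eq_of_subset_of_forall_sdiff_eq_zero hΩ hQΩ,
    setIntegral_eq_of_subset_of_forall_sdiff_eq_zero hΩ hQΩ] at hw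
  rotate_left
  · rintro x ⟨-, hx⟩
    by_cases h : x.1 ∈ Icc a b
    · simp [hψ0 x.2 fun h' => hx ⟨h, h'⟩]
    · simp [hη0 _ h]
  · rintro x ⟨-, hx⟩
    by_cases h : x.1 ∈ Icc a b
    · simp [hψ0 x.2 fun h' => hx ⟨h, h'⟩]
    · simp [hη0' _ h]
  obtain ⟨C, hC⟩ := hψc.exists_bound_of_continuous hψd.continuous
  have hb : ∀ {f : ℝ × EuclideanSpace ℝ (Fin m) → V}, IntegrableOn f Q →
      IntegrableOn (fun x => ψ x.2 • f x) Q := fun hf =>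
    hf.bdd_smul C (hψd.continuous.comp continuous_snd).aestronglyMeasurable
      (Eventually.of_forall fun x => hC x.2)
  have hsum : ∫ x in Q, ψ x.2 • (deriv η x.1 • F x + η x.1 • g x) = 0 := by
    simp only [smul_add]
    rw [integral_add (hb hdF) (hb hηg)]
    simp only [smul_smul, mul_comm (ψ _)]
    rw [hw, neg_add_cancel]
  have hI := hb hH
  rw [hμ] at hsum
  rw [IntegrableOn, hμ] at hI
  rw [integral_prod_symm _ hI] at hsum
  simp only [integral_smul] at hsum
  rw [← hsum, eq_comm]
  exact setIntegral_eq_integral_of_forall_compl_eq_zero fun y hy => by simp [hψ0 y hy]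

lemma tsupport_step_sub {a b q : ℝ} {k : ℕ} (haq : a < q) (hqb : q + 1 / ((k : ℝ) + 1) ≤ b) :
    tsupport (fun v => step a k v - step q k v) ⊆ Icc a b := by
  refine closure_minimal (fun x hx => ?_) isClosed_Icc
  by_contra hxI
  refine hx ?_
  rcases lt_or_ge x a with h | h
  · simp [step_of_le k h.le, step_of_le k (h.le.trans haq.le)]
  · have : b < x := by
      by_contra! h'
      exact hxI ⟨h, h'⟩
    simp [step_of_ge (s := a) (k := k) (u := x) (by linarith),
      step_of_ge (s := q) (k := k) (u := x) (by linarith)]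

lemma box_ae_differentiableAt {a b r : ℝ} {c : EuclideanSpace ℝ (Fin m)}
    (hbox : Icc a b ×ˢ Metric.closedBall c r ⊆ Ω) (hΩ : MeasurableSet Ω)
    (hF : ContinuousOn F Ω) (hg_int : IntegrableOn g Ω)
    (hweak : ∀ φ : ℝ × EuclideanSpace ℝ (Fin m) → ℝ, ContDiff ℝ (⊤ : ℕ∞) φ →
      HasCompactSupport φ → tsupport φ ⊆ Ω →
      ∫ x in Ω, (fderiv ℝ φ x ((1 : ℝ), (0 : EuclideanSpace ℝ (Fin m)))) • F x
        = - ∫ x in Ω, φ x • g x) :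
    ∀ᵐ y : EuclideanSpace ℝ (Fin m), y ∈ Metric.ball c r →
      ∀ᵐ t : ℝ, t ∈ Ioo a b → DifferentiableAt ℝ (fun s => F (s, y)) t := by
  have htest : ∀ᵐ y : EuclideanSpace ℝ (Fin m), ∀ (q : ℚ) (k : ℕ),
      a < q → (q : ℝ) + 1 / ((k : ℝ) + 1) ≤ b → y ∈ Metric.ball c r →
      ∫ u in Icc a b, (deriv (fun v => step a k v - step q k v) u • F (u, y)
        + (step a k u - step q k u) • g (u, y)) = 0 := by
    simp only [ae_all_iff]
    intro q k hq hk
    exact box_ae_eq_zero hbox hΩ hF hg_int hweak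
      ((step_contDiff a k).sub (step_contDiff q k)) (tsupport_step_sub hq hk)
  have hgy : ∀ᵐ y : EuclideanSpace ℝ (Fin m), y ∈ Metric.ball c r →
      IntegrableOn (fun t => g (t, y)) (Icc a b) := by
    have : IntegrableOn g (Icc a b ×ˢ Metric.ball c r) :=
      hg_int.mono_set ((prod_mono subset_rfl Metric.ball_subset_closedBall).trans hbox)
    rw [IntegrableOn, Measure.volume_eq_prod, ← Measure.prod_restrict] at this
    exact (ae_restrict_iff' measurableSet_ball).1 this.prod_left_ae
  filter_upwards [htest, hgy] with y hy hgy hyB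
  refine ae_differentiableAt_of_test (p := fun t => g (t, y)) ?_ (hgy hyB)
    fun q k hq hk => hy q k hq hk hyB
  exact hF.comp (by fun_prop) fun t ht => hbox ⟨ht, Metric.ball_subset_closedBall hyB⟩

end Box

/-! ### Covering by countably many boxes -/

/-- If `F : Ω → V` (with `Ω ⊆ ℝ × ℝ^{n-1} = ℝⁿ`, `n = m + 1 ≥ 2`, open)
is continuous and has an integrable first Bochner weak partial derivative, then for almost
every `y ∈ ℝ^{n-1}` the map `t ↦ F (t, y)` is differentiable at almost every `t` of the
slice `{t | (t, y) ∈ Ω}`. -/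
theorem stmt_3
    {V : Type*} [NormedAddCommGroup V] [NormedSpace ℝ V] [CompleteSpace V]
    (m : ℕ) (hm : 1 ≤ m)
    (Ω : Set (ℝ × EuclideanSpace ℝ (Fin m))) (hΩopen : IsOpen Ω)
    (F g : ℝ × EuclideanSpace ℝ (Fin m) → V)
    (hF : ContinuousOn F Ω)
    (hg_meas : StronglyMeasurable g)
    (hg_int : Integrable g (volume.restrict Ω))
    (hweak : ∀ φ : ℝ × EuclideanSpace ℝ (Fin m) → ℝ, ContDiff ℝ (⊤ : ℕ∞) φ →
      HasCompactSupport φ → tsupport φ ⊆ Ω →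
      ∫ x in Ω, (fderiv ℝ φ x ((1 : ℝ), (0 : EuclideanSpace ℝ (Fin m)))) • F x
        = - ∫ x in Ω, φ x • g x) :
    ∀ᵐ y : EuclideanSpace ℝ (Fin m), ∀ᵐ t : ℝ, (t, y) ∈ Ω →
      DifferentiableWithinAt ℝ (fun s => F (s, y)) {s : ℝ | (s, y) ∈ Ω} t := by
  -- Boxes with rational end points, rational radius and centre in a countable dense set.
  have hall : ∀ᵐ y : EuclideanSpace ℝ (Fin m), ∀ (a b r : ℚ) (i : ℕ),
      Icc (a : ℝ) b ×ˢ Metric.closedBall (TopologicalSpace.denseSeq _ i) (r : ℝ) ⊆ Ω →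
      y ∈ Metric.ball (TopologicalSpace.denseSeq _ i) (r : ℝ) →
      ∀ᵐ t : ℝ, t ∈ Ioo (a : ℝ) b → DifferentiableAt ℝ (fun s => F (s, y)) t := by
    simp only [ae_all_iff]
    intro a b r i hbox
    exact box_ae_differentiableAt hbox hΩopen.measurableSet hF hg_int hweak
  filter_upwards [hall] with y hy
  have hy' : ∀ᵐ t : ℝ, ∀ (a b r : ℚ) (i : ℕ),
      Icc (a : ℝ) b ×ˢ Metric.closedBall (TopologicalSpace.denseSeq _ i) (r : ℝ) ⊆ Ω →
      y ∈ Metric.ball (TopologicalSpace.denseSeq _ i) (r : ℝ) →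
      t ∈ Ioo (a : ℝ) b → DifferentiableAt ℝ (fun s => F (s, y)) t := by
    simp only [ae_all_iff]
    exact hy
  filter_upwards [hy'] with t ht htΩ
  obtain ⟨ε, hε, hball⟩ := Metric.isOpen_iff.1 hΩopen _ htΩ
  obtain ⟨a, ha1, ha2⟩ := exists_rat_btwn (show t - ε < t by linarith)
  obtain ⟨b, hb1, hb2⟩ := exists_rat_btwn (show t < t + ε by linarith)
  obtain ⟨r, hr1, hr2⟩ := exists_rat_btwn (show ε / 3 < ε / 2 by linarith)
  obtain ⟨z, hz, i, rfl⟩ := Metric.dense_iff.1 (TopologicalSpace.denseRange_denseSeq _) y (ε / 3)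
    (by linarith)
  rw [Metric.mem_ball'] at hz
  refine (ht a b r i ?_ (Metric.mem_ball.2 (hz.trans hr1)) ⟨ha2, hb1⟩).differentiableWithinAt
  rintro ⟨s, w⟩ ⟨hs, hw⟩
  refine hball ?_
  rw [Metric.mem_ball, Prod.dist_eq, max_lt_iff]
  constructor
  · rw [Real.dist_eq, abs_lt]
    constructor <;> [have := hs.1; have := hs.2] <;> simp only at * <;> linarith
  · have h1 := Metric.mem_closedBall.1 hw
    have h2 := dist_triangle_right w y (TopologicalSpace.denseSeq _ i)
    simp only at *
    linarith
end

section
/- Let (B, d_B) be a separable metric space with basepoint O_B, and let κ : B → ℓ^∞ be an isometric embedding with κ(O_B) = 0 (for instance, a Kuratowski embedding post-composed with the translation by −κ(O_B)). Let A = ℝ with the standard metric and basepoint 0, and let D be the sup-glued pseudometric on A ⊔ B given by D(a,a') = |a − a'|, D(b,b') = d_B(b,b'), and D(a,b) = max(|a|, d_B(b, O_B)) for a, a' ∈ A and b, b' ∈ B. Define ι : A ⊔ B → ℓ^∞ by ι(a) = a·e₀ for a ∈ A and ι(b) = τ(κ(b)) for b ∈ B, where e₀ = (1,0,0,…) and τ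 is the shift operator. Then ι is an isometric embedding with respect to D: ‖ι(p) − ι(q)‖_∞ = D(p, q) for all p, q ∈ A ⊔ B. -/
/-!
The first coordinate and the tail of a sequence contribute independently to the sup norm:
`‖x‖ = max |x 0| ‖tail x‖` (`norm_eq_max_of_tail`). The real line occupies only the first
coordinate and the shifted copy of `B` only the tail, so in each of the four cases this formula
applied to `ι p - ι q` is the glued distance; for mixed pairs the tail is `± κ b`, whose norm is
`dist b OB` because `κ OB = 0`.
-/

/-- `ℓ^∞`: the Banach space of bounded real sequences with the supremum norm. -/
abbrev LinfR : Type := lp (fun _ : ℕ => ℝ) ⊤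

/-- The shift operator `τ(σ₁, σ₂, …) = (0, σ₁, σ₂, …)` on `ℓ^∞`. -/
def shiftOp (σ : LinfR) : LinfR :=
  ⟨fun k => Nat.rec 0 (fun k' _ => σ k') k, by
    apply memℓp_infty
    obtain ⟨M, hM⟩ := (lp.memℓp σ).bddAbove
    refine ⟨max 0 M, ?_⟩
    rintro x ⟨k, rfl⟩
    cases k with
    | zero => simp
    | succ k' => exact le_trans (hM ⟨k', rfl⟩) (le_max_right 0 M)⟩

/-- The sequence `e₀ = (1, 0, 0, …)` in `ℓ^∞`. -/
def e0 : LinfR :=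
  ⟨fun k => if k = 0 then 1 else 0, by
    apply memℓp_infty
    refine ⟨1, ?_⟩
    rintro x ⟨k, rfl⟩
    by_cases h : k = 0 <;> simp [h]⟩

/-- The "supremum" gluing distance on the disjoint union of two pointed metric spaces. -/
def glueDist {A B : Type*} [MetricSpace A] [MetricSpace B] (OA : A) (OB : B) :
    A ⊕ B → A ⊕ B → ℝ
  | Sum.inl a, Sum.inl a' => dist a a'
  | Sum.inr b, Sum.inr b' => dist b b'
  | Sum.inl a, Sum.inr b => max (dist a OA) (dist b OB)
  | Sum.inr b, Sum.inl a => max (dist a OA) (dist b OB)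

/-- The norm of a bounded sequence `x` is the maximum of the absolute value of its first term and
the norm of its tail `σ`. -/
lemma norm_eq_max_of_tail (x σ : LinfR) (h : ∀ k, x (k + 1) = σ k) :
    ‖x‖ = max |x 0| ‖σ‖ := by
  apply le_antisymm
  · refine lp.norm_le_of_forall_le (le_max_of_le_left (abs_nonneg _)) fun k => ?_
    cases k with
    | zero => exact le_max_left _ _
    | succ k =>
      rw [h]
      exact le_max_of_le_right (lp.norm_apply_le_norm ENNReal.top_ne_zero σ k)
  · refine max_le (lp.norm_apply_le_norm ENNReal.top_ne_zero x 0) ?_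
    refine lp.norm_le_of_forall_le (norm_nonneg _) fun k => ?_
    rw [← h]
    exact lp.norm_apply_le_norm ENNReal.top_ne_zero x (k + 1)

lemma shiftOp_apply_zero (σ : LinfR) : shiftOp σ 0 = 0 := rfl

lemma shiftOp_apply_succ (σ : LinfR) (k : ℕ) : shiftOp σ (k + 1) = σ k := rfl

lemma smul_e0_apply_zero (a : ℝ) : (a • e0) 0 = a := mul_one a

lemma smul_e0_apply_succ (a : ℝ) (k : ℕ) : (a • e0) (k + 1) = 0 := mul_zero a

lemma linf_sub_apply (x y : LinfR) (k : ℕ) : (x - y) k = x k - y k := rfl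

/-- Gluing the real line (basepoint `0`) to a separable metric space `B`
(basepoint `O_B`) with the sup-glued pseudometric, the map sending `a ∈ ℝ` to `a • e₀`
and `b ∈ B` to the shift of `κ b` (where `κ : B → ℓ^∞` is an isometric embedding with
`κ O_B = 0`) is an isometric embedding of the glued space into `ℓ^∞`. -/
theorem stmt_7
    {B : Type*} [MetricSpace B] [TopologicalSpace.SeparableSpace B] (OB : B)
    (κ : B → LinfR) (hκ : Isometry κ) (hκ0 : κ OB = 0)
    (ι : ℝ ⊕ B → LinfR)
    (hι : ι = Sum.elim (fun a : ℝ => a • e0) (fun b : B => shiftOp (κ b))) :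
    ∀ p q : ℝ ⊕ B, ‖ι p - ι q‖ = glueDist (0 : ℝ) OB p q := by
  subst hι
  -- Since `κ OB = 0`, the distance to the basepoint is the norm of the image under `κ`.
  have hnorm : ∀ b, dist b OB = ‖κ b‖ := fun b => by
    rw [← hκ.dist_eq, hκ0, dist_zero_right]
  rintro (a | b) (a' | b') <;> simp only [Sum.elim_inl, Sum.elim_inr]
  · rw [norm_eq_max_of_tail _ 0 fun k => by
      rw [linf_sub_apply, smul_e0_apply_succ, smul_e0_apply_succ, sub_zero]; rfl]
    rw [linf_sub_apply, smul_e0_apply_zero, smul_e0_apply_zero]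
    simp [glueDist, Real.dist_eq]
  · rw [norm_eq_max_of_tail _ (-κ b') fun k => by
      rw [linf_sub_apply, smul_e0_apply_succ, shiftOp_apply_succ, zero_sub]; rfl]
    rw [linf_sub_apply, smul_e0_apply_zero, shiftOp_apply_zero]
    simp [glueDist, hnorm]
  · rw [norm_eq_max_of_tail _ (κ b) fun k => by
      rw [linf_sub_apply, smul_e0_apply_succ, shiftOp_apply_succ, sub_zero]]
    rw [linf_sub_apply, smul_e0_apply_zero, shiftOp_apply_zero]
    simp [glueDist, hnorm]
  · rw [norm_eq_max_of_tail _ (κ b - κ b') fun k => by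
      rw [linf_sub_apply, shiftOp_apply_succ, shiftOp_apply_succ]; rfl]
    rw [linf_sub_apply, shiftOp_apply_zero, shiftOp_apply_zero]
    simp [glueDist, ← hκ.dist_eq b b', dist_eq_norm]
end
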